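/- Let (Ω, 𝒜, μ) be a measure space, p ∈ [1,∞), and T a positive C₀-semigroup on L_p(μ) with generator A, and let V : Ω → [0,∞] be T-admissible. Then for all ε ∈ (0,1], all n ∈ ℕ, and all t ≥ 0, one has T_{εV}(t) ≥ e^{−εnt} T_{V − V∧n}(t) in the operator order, and consequently T_{0,V} ≥ (T_V)_{−V}, i.e., T_{0,V}(t)f ≥ (T_V)_{−V}(t)f for all t ≥ 0 and all f ∈ L_p(μ) with f ≥ 0. -/

import Mathlib

open MeasureTheory Filter Topology ENNReal

noncomputable section

namespace Absorption

variable {E : Type*} [NormedAddCommGroup E] [NormedSpace ℝ E]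

/-- A one-parameter semigroup of bounded operators (for nonnegative times). -/
def IsSemigroup (T : ℝ → E →L[ℝ] E) : Prop :=
  T 0 = ContinuousLinearMap.id ℝ E ∧
    ∀ s t : ℝ, 0 ≤ s → 0 ≤ t → T (s + t) = (T s).comp (T t)

/-- A `C₀`-semigroup: a one-parameter semigroup which is strongly continuous on `[0, ∞)`. -/
def IsC0Semigroup (T : ℝ → E →L[ℝ] E) : Prop :=
  IsSemigroup T ∧ ∀ f : E, ContinuousOn (fun t => T t f) (Set.Ici (0 : ℝ))

/-- `(f, g)` belongs to the graph of the generator of the semigroup `T`. -/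
def InGenerator (T : ℝ → E →L[ℝ] E) (f g : E) : Prop :=
  Tendsto (fun t : ℝ => t⁻¹ • (T t f - f)) (𝓝[>] (0 : ℝ)) (𝓝 g)

variable {Ω : Type*} [MeasurableSpace Ω]

/-- A function into a measurable space is *locally measurable* (w.r.t. `μ`) if on every set of
finite measure it coincides a.e. with a measurable function. -/
def LocallyMeasurable {α : Type*} [MeasurableSpace α] (μ : Measure Ω) (V : Ω → α) : Prop :=
  ∀ B : Set Ω, MeasurableSet B → μ B < ∞ →
    ∃ g : Ω → α, Measurable g ∧ ∀ᵐ ω ∂(μ.restrict B), V ω = g ω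

/-- A set is a local `μ`-null set if its intersection with every measurable set of finite
measure is null. -/
def IsLocalNullSet (μ : Measure Ω) (N : Set Ω) : Prop :=
  ∀ B : Set Ω, MeasurableSet B → μ B < ∞ → μ (N ∩ B) = 0

/-- Positivity of a family of operators on `L_p` (for positive times). -/
def IsPositiveSG {p : ℝ≥0∞} {μ : Measure Ω} [Fact (1 ≤ p)]
    (T : ℝ → Lp ℝ p μ →L[ℝ] Lp ℝ p μ) : Prop :=
  ∀ t : ℝ, 0 ≤ t → ∀ f : Lp ℝ p μ, 0 ≤ f → 0 ≤ T t f

/-- A band projection on the Banach lattice `L_p(μ)`: an idempotent operator `P`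
with `0 ≤ P f ≤ f` for all `f ≥ 0`. -/
def IsBandProjection {p : ℝ≥0∞} {μ : Measure Ω} [Fact (1 ≤ p)]
    (P : Lp ℝ p μ →L[ℝ] Lp ℝ p μ) : Prop :=
  P.comp P = P ∧ ∀ f : Lp ℝ p μ, 0 ≤ f → 0 ≤ P f ∧ P f ≤ f

/-- `S = (e^{t(A−W)})_{t ≥ 0}`: `S` is the `C₀`-semigroup whose generator is `A - W`,
where `A` is the generator of `T` and the bounded function `W` acts by multiplication. -/
def IsPerturbedSG (μ : Measure Ω) (p : ℝ≥0∞) [Fact (1 ≤ p)]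
    (T S : ℝ → Lp ℝ p μ →L[ℝ] Lp ℝ p μ) (W : Ω → ℝ) : Prop :=
  IsC0Semigroup S ∧
    ∀ f g : Lp ℝ p μ, InGenerator S f g ↔
      ∃ g₀ : Lp ℝ p μ, InGenerator T f g₀ ∧
        ⇑g =ᵐ[μ] fun ω => g₀ ω - W ω * f ω

/-- Same as `IsPerturbedSG`, for semigroups acting on a subspace `F` of `L_p(μ)`. -/
def IsPerturbedSGSub (μ : Measure Ω) (p : ℝ≥0∞) [Fact (1 ≤ p)] (F : Submodule ℝ (Lp ℝ p μ))
    (T S : ℝ → F →L[ℝ] F) (W : Ω → ℝ) : Prop :=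
  IsC0Semigroup S ∧
    ∀ f g : F, InGenerator S f g ↔
      ∃ g₀ : F, InGenerator T f g₀ ∧
        ⇑(g : Lp ℝ p μ) =ᵐ[μ] fun ω => (g₀ : Lp ℝ p μ) ω - W ω * (f : Lp ℝ p μ) ω

/-- The truncation `V ∧ n` of `V : Ω → [0,∞]`, as a real-valued function. -/
def trunc (V : Ω → ℝ≥0∞) (n : ℕ) : Ω → ℝ := fun ω => (min (V ω) (n : ℝ≥0∞)).toReal

/-- The scalar multiple `ε V` of an absorption rate `V : Ω → [0,∞]`. -/
def smulRate (ε : ℝ) (V : Ω → ℝ≥0∞) : Ω → ℝ≥0∞ := fun ω => ENNReal.ofReal ε * V ω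

/-- The absorption rate `V - V ∧ n` (with value `∞` wherever `V = ∞`). -/
def resid (V : Ω → ℝ≥0∞) (n : ℕ) : Ω → ℝ≥0∞ := fun ω => V ω - min (V ω) (n : ℝ≥0∞)

/-- `TV` is the absorption semigroup `T_V` associated with the rate `V : Ω → [0,∞]`, i.e.
the strong limit `T_V(t) = s-lim_{n→∞} e^{t(A - V∧n)}` (for `t ≥ 0`). -/
def IsAbsorptionSG (μ : Measure Ω) (p : ℝ≥0∞) [Fact (1 ≤ p)]
    (T : ℝ → Lp ℝ p μ →L[ℝ] Lp ℝ p μ) (V : Ω → ℝ≥0∞)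
    (TV : ℝ → Lp ℝ p μ →L[ℝ] Lp ℝ p μ) : Prop :=
  ∃ S : ℕ → ℝ → Lp ℝ p μ →L[ℝ] Lp ℝ p μ,
    (∀ n, IsPerturbedSG μ p T (S n) (trunc V n)) ∧
    ∀ t : ℝ, 0 ≤ t → ∀ f, Tendsto (fun n => S n t f) atTop (𝓝 (TV t f))

/-- `V : Ω → [0,∞]` is `T`-admissible: `V` is locally measurable, the strong limits
`T_V(t) = s-lim_{n→∞} e^{t(A - V∧n)}` exist, and `T_V` is a `C₀`-semigroup. -/
def Admissible (μ : Measure Ω) (p : ℝ≥0∞) [Fact (1 ≤ p)]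
    (T : ℝ → Lp ℝ p μ →L[ℝ] Lp ℝ p μ) (V : Ω → ℝ≥0∞) : Prop :=
  LocallyMeasurable μ V ∧
  ∃ TV, IsAbsorptionSG μ p T V TV ∧ IsC0Semigroup TV

/-- The truncation `(V ∧ n) ∨ (−n)` of an extended-real-valued rate, as a real function. -/
def truncE (V : Ω → EReal) (n : ℕ) : Ω → ℝ :=
  fun ω => (max (min (V ω) (n : EReal)) (-(n : EReal))).toReal

/-- `TV` is the absorption semigroup `T_V` of an extended-real-valued rate `V`:
`T_V(t) = s-lim_{n→∞} e^{t(A - (V∧n)∨(−n))}` (for `t ≥ 0`). -/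
def IsAbsorptionSGE (μ : Measure Ω) (p : ℝ≥0∞) [Fact (1 ≤ p)]
    (T : ℝ → Lp ℝ p μ →L[ℝ] Lp ℝ p μ) (V : Ω → EReal)
    (TV : ℝ → Lp ℝ p μ →L[ℝ] Lp ℝ p μ) : Prop :=
  ∃ S : ℕ → ℝ → Lp ℝ p μ →L[ℝ] Lp ℝ p μ,
    (∀ n, IsPerturbedSG μ p T (S n) (truncE V n)) ∧
    ∀ t : ℝ, 0 ≤ t → ∀ f, Tendsto (fun n => S n t f) atTop (𝓝 (TV t f))

/-- `T`-admissibility for an extended-real-valued absorption rate `V`. -/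
def AdmissibleE (μ : Measure Ω) (p : ℝ≥0∞) [Fact (1 ≤ p)]
    (T : ℝ → Lp ℝ p μ →L[ℝ] Lp ℝ p μ) (V : Ω → EReal) : Prop :=
  LocallyMeasurable μ V ∧
  ∃ TV, IsAbsorptionSGE μ p T V TV ∧ IsC0Semigroup TV

end Absorption

open Absorption

/-!
A bounded operator `B` by which the generators of two `C₀`-semigroups `P` and `Q` differ is felt
through Duhamel's formula `Q t f - P t f = ∫₀ᵗ P (t - s) (B (Q s f)) ds`. If `P` and `B` are
positive, the formula bounds the negative part of the orbit `Q s f` of some `f ≥ 0` by an integral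
of its own past, so that it vanishes by Gronwall's inequality; hence `Q` is positive, and a second
look at the formula gives `P ≤ Q`. Rescaling `P` by `e^{-ct}` yields `e^{-ct} P ≤ Q` as soon as
`B + c ≥ 0`. As `εV ≤ εn + (V - V∧n)` for `0 ≤ ε ≤ 1`, and likewise after truncation of `εV` and
`V - V∧n` at the same level `m`, this compares the semigroups with truncated rates. Now let
`m → ∞`, and then `ε → 0` and `n → ∞`.
-/

namespace Absorption

section Primitive

variable {E : Type*} [NormedAddCommGroup E] [NormedSpace ℝ E]

lemma hasDerivWithinAt_Ioi_iff_tendsto_slope_zero {F : ℝ → E} {F' : E} {x : ℝ} :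
    HasDerivWithinAt F F' (Set.Ioi x) x ↔
      Tendsto (fun r : ℝ => r⁻¹ • (F (x + r) - F x)) (𝓝[>] 0) (𝓝 F') := by
  have hmap : map (x + ·) (𝓝[>] (0 : ℝ)) = 𝓝[>] x := by
    have := (Homeomorph.addLeft x).isEmbedding.map_nhdsWithin_eq (Set.Ioi 0) 0
    simpa only [Homeomorph.coe_addLeft, Set.image_const_add_Ioi, add_zero] using this
  rw [hasDerivWithinAt_iff_tendsto_slope' Set.self_notMem_Ioi, ← hmap, tendsto_map'_iff]
  simp only [Function.comp_def, slope, vsub_eq_sub, add_sub_cancel_left]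

lemma hasDerivWithinAt_Ici_intervalIntegral [CompleteSpace E] {v : ℝ → E} {a b s : ℝ}
    (hv : ContinuousOn v (Set.Icc a b)) (hs : s ∈ Set.Ico a b) :
    HasDerivWithinAt (fun r => ∫ x in a..r, v x) (v s) (Set.Ici s) s := by
  have hs' : s ∈ Set.Icc a b := Set.Ico_subset_Icc_self hs
  have : Fact (s ∈ Set.Icc a b) := ⟨hs'⟩
  have hint : IntervalIntegrable v volume a s :=
    (hv.mono (Set.Icc_subset_Icc_right hs.2.le)).intervalIntegrable_of_Icc hs.1
  exact (intervalIntegral.integral_hasDerivWithinAt_right hint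
    (hv.stronglyMeasurableAtFilter_nhdsWithin measurableSet_Icc s)
    (hv s hs')).mono_of_mem_nhdsWithin (Icc_mem_nhdsGE_of_mem hs)

lemma tendsto_inv_smul_intervalIntegral [CompleteSpace E] {v : ℝ → E} {a : ℝ}
    (hv : ContinuousOn v (Set.Ici a)) :
    Tendsto (fun r : ℝ => r⁻¹ • ∫ s in a..(a + r), v s) (𝓝[>] 0) (𝓝 (v a)) := by
  have hderiv := hasDerivWithinAt_Ici_intervalIntegral (b := a + 1)
    (hv.mono Set.Icc_subset_Ici_self) ⟨le_rfl, lt_add_one a⟩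
  simpa using hasDerivWithinAt_Ioi_iff_tendsto_slope_zero.1 hderiv.Ioi_of_Ici

lemma intervalIntegral_nonneg [PartialOrder E] [IsOrderedAddMonoid E] [IsOrderedModule ℝ E]
    [ClosedIciTopology E] {a b : ℝ} (hab : a ≤ b) {v : ℝ → E}
    (hv : ∀ s ∈ Set.Icc a b, 0 ≤ v s) : 0 ≤ ∫ s in a..b, v s := by
  rw [intervalIntegral.integral_of_le hab]
  refine integral_nonneg_of_ae ?_
  filter_upwards [ae_restrict_mem measurableSet_Ioc] with s hs
  exact hv s (Set.Ioc_subset_Icc_self hs)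

lemma eq_zero_of_le_mul_intervalIntegral {φ : ℝ → ℝ} {K a b : ℝ}
    (hφ : ContinuousOn φ (Set.Icc a b)) (hφ0 : ∀ t ∈ Set.Icc a b, 0 ≤ φ t)
    (hle : ∀ t ∈ Set.Icc a b, φ t ≤ K * ∫ s in a..t, φ s) :
    ∀ t ∈ Set.Icc a b, φ t = 0 := by
  intro t ht
  have hab : a ≤ b := ht.1.trans ht.2
  set F : ℝ → ℝ := fun t => ∫ s in a..t, φ s
  have hF0 : ∀ s ∈ Set.Icc a b, 0 ≤ F s := fun s hs =>
    intervalIntegral.integral_nonneg hs.1 fun r hr => hφ0 r ⟨hr.1, hr.2.trans hs.2⟩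
  have hFcont : ContinuousOn F (Set.Icc a b) := by
    rw [← Set.uIcc_of_le hab] at hφ ⊢
    exact intervalIntegral.continuousOn_primitive_interval (hφ.integrableOn_compact isCompact_uIcc)
  have hFderiv : ∀ s ∈ Set.Ico a b, HasDerivWithinAt F (φ s) (Set.Ici s) s := fun s hs =>
    hasDerivWithinAt_Ici_intervalIntegral hφ hs
  have hbound := norm_le_gronwallBound_of_norm_deriv_right_le hFcont hFderiv
    (δ := 0) (K := K) (ε := 0) (by simp [F]) (fun s hs => by
      have hs' := Set.Ico_subset_Icc_self hs
      simpa [abs_of_nonneg (hφ0 s hs'), abs_of_nonneg (hF0 s hs')] using hle s hs') t ht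
  have hFt : F t = 0 := by simpa [gronwallBound_ε0_δ0] using hbound
  exact le_antisymm (by simpa [F, hFt] using hle t ht) (hφ0 t ht)

end Primitive

section Semigroup

variable {E : Type*} [NormedAddCommGroup E] [NormedSpace ℝ E] {P Q R : ℝ → E →L[ℝ] E}

/-- The generator of `Q` is that of `P` plus the bounded operator `B`, with the same domain. The
generator being a graph, `(f, g)` lies in the graph for `Q` iff `(f, g - B f)` lies in that
for `P`. -/
def IsBoundedPerturbation (P Q : ℝ → E →L[ℝ] E) (B : E →L[ℝ] E) : Prop :=
  ∀ f g : E, InGenerator Q f g ↔ InGenerator P f (g - B f)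

lemma IsBoundedPerturbation.trans {B C : E →L[ℝ] E} (hPQ : IsBoundedPerturbation P Q B)
    (hQR : IsBoundedPerturbation Q R C) : IsBoundedPerturbation P R (B + C) := fun f g => by
  rw [hQR, hPQ, add_apply, add_comm (B f), sub_sub]

lemma IsBoundedPerturbation.symm {B : E →L[ℝ] E} (hPQ : IsBoundedPerturbation P Q B) :
    IsBoundedPerturbation Q P (-B) := fun f g => by
  rw [hPQ, neg_apply, sub_neg_eq_add, add_sub_cancel_right]

lemma IsBoundedPerturbation.tendsto_inv_smul_sub {B : E →L[ℝ] E}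
    (hPQ : IsBoundedPerturbation P Q B) {f g : E} (hf : InGenerator Q f g) :
    Tendsto (fun r : ℝ => r⁻¹ • (Q r f - P r f)) (𝓝[>] 0) (𝓝 (B f)) := by
  have hlim := Tendsto.sub (G := E) hf ((hPQ f g).1 hf)
  rw [sub_sub_self] at hlim
  refine hlim.congr fun r => ?_
  rw [← smul_sub, sub_sub_sub_cancel_right]

lemma isBoundedPerturbation_of_tendsto {B : E →L[ℝ] E}
    (h : ∀ f, Tendsto (fun r : ℝ => r⁻¹ • (Q r f - P r f)) (𝓝[>] 0) (𝓝 (B f))) :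
    IsBoundedPerturbation P Q B := by
  intro f g
  constructor <;> intro hf
  · refine (Tendsto.sub (G := E) hf (h f)).congr fun r => ?_
    rw [← smul_sub, sub_right_comm, sub_sub_self]
  · have hlim := Tendsto.add (M := E) hf (h f)
    rw [sub_add_cancel] at hlim
    refine hlim.congr fun r => ?_
    rw [← smul_add, add_comm, sub_add_sub_cancel]

lemma IsSemigroup.add_apply (hP : IsSemigroup P) {s t : ℝ} (hs : 0 ≤ s) (ht : 0 ≤ t) (f : E) :
    P (s + t) f = P s (P t f) := by
  rw [hP.2 s t hs ht, ContinuousLinearMap.comp_apply]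

lemma IsSemigroup.zero_apply (hP : IsSemigroup P) (f : E) : P 0 f = f := by
  rw [hP.1, ContinuousLinearMap.id_apply]

lemma InGenerator.apply (hP : IsSemigroup P) {f g : E} (hf : InGenerator P f g) {s : ℝ}
    (hs : 0 ≤ s) : InGenerator P (P s f) (P s g) := by
  refine (((P s).continuous.tendsto g).comp hf).congr' ?_
  filter_upwards [self_mem_nhdsWithin] with r hr
  rw [Function.comp_apply, map_smul, map_sub, ← hP.add_apply hs (Set.mem_Ioi.1 hr).le,
    ← hP.add_apply (Set.mem_Ioi.1 hr).le hs, add_comm]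

lemma IsC0Semigroup.exp_smul (hP : IsC0Semigroup P) (c : ℝ) :
    IsC0Semigroup (fun t => Real.exp (c * t) • P t) := by
  refine ⟨⟨by simp [hP.1.1], fun s t hs ht => ?_⟩, fun f => ?_⟩
  · ext f
    simp only [mul_add, Real.exp_add, smul_apply, ContinuousLinearMap.comp_apply,
      hP.1.add_apply hs ht, map_smul, mul_smul]
    rw [smul_comm]
  · have hexp : ContinuousOn (fun t : ℝ => Real.exp (c * t)) (Set.Ici 0) := by fun_prop
    exact hexp.smul (hP.2 f)

lemma IsC0Semigroup.tendsto_zero (hP : IsC0Semigroup P) (f : E) :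
    Tendsto (fun t => P t f) (𝓝[>] 0) (𝓝 f) := by
  simpa [hP.1.1] using (hP.2 f 0 Set.self_mem_Ici).tendsto.mono_left
    (nhdsWithin_mono _ Set.Ioi_subset_Ici_self)

lemma IsC0Semigroup.isBoundedPerturbation_exp_smul (hP : IsC0Semigroup P) (c : ℝ) :
    IsBoundedPerturbation P (fun t => Real.exp (c * t) • P t)
      (c • ContinuousLinearMap.id ℝ E) := by
  have hexp : Tendsto (fun t : ℝ => t⁻¹ * (Real.exp (c * t) - 1)) (𝓝[>] 0) (𝓝 c) := by
    have hderiv : HasDerivAt (fun t : ℝ => Real.exp (c * t)) c 0 := by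
      simpa using ((hasDerivAt_id (0 : ℝ)).const_mul c).exp
    simpa using hderiv.tendsto_slope_zero_right
  refine isBoundedPerturbation_of_tendsto fun f => (hexp.smul (hP.tendsto_zero f)).congr fun t => ?_
  rw [mul_smul, sub_smul, one_smul, smul_apply]

variable [CompleteSpace E]

lemma IsC0Semigroup.exists_norm_le (hP : IsC0Semigroup P) (τ : ℝ) :
    ∃ M, 0 ≤ M ∧ ∀ s ∈ Set.Icc 0 τ, ‖P s‖ ≤ M := by
  obtain ⟨C, hC⟩ : ∃ C, ∀ s : Set.Icc (0 : ℝ) τ, ‖P s‖ ≤ C := banach_steinhaus fun f => by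
    obtain ⟨C, hC⟩ := isCompact_Icc.exists_bound_of_continuousOn
      ((hP.2 f).mono Set.Icc_subset_Ici_self)
    exact ⟨C, fun s => hC s s.2⟩
  exact ⟨max C 0, le_max_right _ _, fun s hs => (hC ⟨s, hs⟩).trans (le_max_left _ _)⟩

lemma IsC0Semigroup.continuousOn_uncurry (hP : IsC0Semigroup P) :
    ContinuousOn (fun x : ℝ × E => P x.1 x.2) (Set.Ici 0 ×ˢ Set.univ) := by
  rintro ⟨t, f⟩ ⟨ht : 0 ≤ t, -⟩
  set l := 𝓝[Set.Ici 0 ×ˢ Set.univ] (t, f)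
  obtain ⟨M, -, hM⟩ := hP.exists_norm_le (t + 1)
  have hfst : Tendsto Prod.fst l (𝓝 t) := continuous_fst.continuousWithinAt
  have hsnd : Tendsto Prod.snd l (𝓝 f) := continuous_snd.continuousWithinAt
  have hnonneg : ∀ᶠ x in l, 0 ≤ x.1 := by
    filter_upwards [self_mem_nhdsWithin] with x hx using hx.1
  have horbit : Tendsto (fun x : ℝ × E => P x.1 f) l (𝓝 (P t f)) :=
    (hP.2 f t ht).tendsto.comp (tendsto_nhdsWithin_iff.2 ⟨hfst, hnonneg⟩)
  have herror : Tendsto (fun x : ℝ × E => P x.1 (x.2 - f)) l (𝓝 0) := by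
    refine squeeze_zero_norm' (a := fun x => M * ‖x.2 - f‖) ?_ ?_
    · filter_upwards [hnonneg, hfst.eventually (eventually_le_nhds (lt_add_one t))] with x h0 h1
      exact (P x.1).le_of_opNorm_le (hM _ ⟨h0, h1⟩) _
    · simpa using (hsnd.sub_const f).norm.const_mul M
  simpa [ContinuousWithinAt, l] using horbit.add herror

lemma IsC0Semigroup.continuousOn_sub_apply (hP : IsC0Semigroup P) {t : ℝ} {v : ℝ → E}
    (hv : ContinuousOn v (Set.Icc 0 t)) :
    ContinuousOn (fun s => P (t - s) (v s)) (Set.Icc 0 t) :=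
  hP.continuousOn_uncurry.comp (f := fun s => (t - s, v s)) (by fun_prop)
    fun _ hs => ⟨sub_nonneg.2 hs.2, Set.mem_univ _⟩

lemma IsC0Semigroup.inGenerator_intervalIntegral (hP : IsC0Semigroup P) (f : E) {h : ℝ}
    (hh : 0 ≤ h) : InGenerator P (∫ s in (0 : ℝ)..h, P s f) (P h f - f) := by
  have hint : ∀ {a b : ℝ}, 0 ≤ a → 0 ≤ b → IntervalIntegrable (fun s => P s f) volume a b :=
    fun ha hb => ((hP.2 f).mono fun s hs => (le_min ha hb).trans hs.1).intervalIntegrable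
  have hlim := (tendsto_inv_smul_intervalIntegral ((hP.2 f).mono (Set.Ici_subset_Ici.2 hh))).sub
    (tendsto_inv_smul_intervalIntegral (hP.2 f))
  rw [hP.1.zero_apply] at hlim
  refine hlim.congr' ?_
  filter_upwards [self_mem_nhdsWithin] with r (hr : 0 < r)
  have hshift : P r (∫ s in (0 : ℝ)..h, P s f) = ∫ s in r..(h + r), P s f := by
    have htranslate := intervalIntegral.integral_comp_add_right (fun s => P s f) r (a := 0) (b := h)
    rw [zero_add] at htranslate
    rw [← (P r).intervalIntegral_comp_comm (hint le_rfl hh), ← htranslate]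
    refine intervalIntegral.integral_congr fun s hs => ?_
    rw [Set.uIcc_of_le hh] at hs
    rw [add_comm s r, hP.1.add_apply hr.le hs.1]
  rw [hshift, ← smul_sub, zero_add, intervalIntegral.integral_interval_sub_interval_comm'
    (hint hh (by positivity)) (hint le_rfl hr.le) (hint hh le_rfl)]

lemma IsC0Semigroup.dense_domain (hP : IsC0Semigroup P) :
    Dense {f : E | ∃ g, InGenerator P f g} := by
  intro f
  have hmean := tendsto_inv_smul_intervalIntegral (hP.2 f)
  rw [hP.1.zero_apply] at hmean
  refine mem_closure_of_tendsto hmean ?_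
  filter_upwards [self_mem_nhdsWithin] with h (hh : 0 < h)
  refine ⟨h⁻¹ • (P h f - f), ?_⟩
  refine ((hP.inGenerator_intervalIntegral f hh.le).const_smul h⁻¹).congr fun r => ?_
  rw [zero_add, map_smul, ← smul_sub, smul_comm]

namespace IsBoundedPerturbation

variable {B : E →L[ℝ] E}

lemma hasDerivWithinAt_sub_apply (hPQ : IsBoundedPerturbation P Q B) (hP : IsC0Semigroup P)
    (hQ : IsSemigroup Q) {f g : E} (hf : InGenerator Q f g) {s t : ℝ} (hs : 0 ≤ s) (hst : s < t) :
    HasDerivWithinAt (fun r => P (t - r) (Q r f)) (P (t - s) (B (Q s f))) (Set.Ioi s) s := by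
  rw [hasDerivWithinAt_Ioi_iff_tendsto_slope_zero]
  have hrt : ∀ᶠ r in 𝓝[>] (0 : ℝ), r ≤ t - s :=
    (eventually_le_nhds (sub_pos.2 hst)).filter_mono nhdsWithin_le_nhds
  have htime : Tendsto (fun r => t - s - r) (𝓝[>] 0) (𝓝 (t - s)) := by
    have hid : Tendsto (fun r : ℝ => r) (𝓝[>] 0) (𝓝 0) := nhdsWithin_le_nhds
    simpa only [sub_zero] using hid.const_sub (t - s)
  have hlim := (hP.continuousOn_uncurry (t - s, B (Q s f))
    ⟨sub_nonneg.2 hst.le, Set.mem_univ _⟩).tendsto.comp (tendsto_nhdsWithin_iff.2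
      ⟨htime.prodMk_nhds (hPQ.tendsto_inv_smul_sub (hf.apply hQ hs)),
        hrt.mono fun r hr => ⟨sub_nonneg.2 hr, Set.mem_univ _⟩⟩)
  refine hlim.congr' ?_
  filter_upwards [hrt, self_mem_nhdsWithin] with r hrt (hr : 0 < r)
  have hQr : Q (s + r) f = Q r (Q s f) := by rw [add_comm, hQ.add_apply hr.le hs]
  have hPr : P (t - s) (Q s f) = P (t - s - r) (P r (Q s f)) := by
    rw [← hP.1.add_apply (sub_nonneg.2 hrt) hr.le, sub_add_cancel]
  rw [hQr, hPr, Function.comp_apply, ← sub_sub, map_smul, map_sub]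

lemma integral_eq_of_inGenerator (hPQ : IsBoundedPerturbation P Q B) (hP : IsC0Semigroup P)
    (hQ : IsC0Semigroup Q) {f g : E} (hf : InGenerator Q f g) {t : ℝ} (ht : 0 ≤ t) :
    ∫ s in (0 : ℝ)..t, P (t - s) (B (Q s f)) = Q t f - P t f := by
  have horbit : ContinuousOn (fun s => Q s f) (Set.Icc 0 t) :=
    (hQ.2 f).mono Set.Icc_subset_Ici_self
  rw [intervalIntegral.integral_eq_sub_of_hasDeriv_right_of_le ht
    (hP.continuousOn_sub_apply horbit)
    (fun s hs => hPQ.hasDerivWithinAt_sub_apply hP hQ.1 hf hs.1.le hs.2)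
    ((hP.continuousOn_sub_apply (B.continuous.comp_continuousOn horbit)).intervalIntegrable_of_Icc
      ht), sub_self, sub_zero, hP.1.zero_apply, hQ.1.zero_apply]

end IsBoundedPerturbation

lemma IsC0Semigroup.continuous_integral_sub_apply (hP : IsC0Semigroup P) (hQ : IsC0Semigroup Q)
    (B : E →L[ℝ] E) {t : ℝ} (ht : 0 ≤ t) :
    Continuous fun f => ∫ s in (0 : ℝ)..t, P (t - s) (B (Q s f)) := by
  obtain ⟨M, hM0, hM⟩ := hP.exists_norm_le t
  obtain ⟨N, hN0, hN⟩ := hQ.exists_norm_le t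
  refine continuous_iff_continuousAt.2 fun f₀ =>
    intervalIntegral.continuousAt_of_dominated_interval
      (bound := fun _ => M * (‖B‖ * (N * (‖f₀‖ + 1)))) ?_ ?_ intervalIntegrable_const ?_
  · refine Eventually.of_forall fun f => ?_
    rw [Set.uIoc_of_le ht]
    exact (hP.continuousOn_sub_apply (B.continuous.comp_continuousOn
      ((hQ.2 f).mono Set.Icc_subset_Ici_self))).mono Set.Ioc_subset_Icc_self
        |>.aestronglyMeasurable measurableSet_Ioc
  · filter_upwards [continuous_norm.continuousAt.eventually_le_const (lt_add_one ‖f₀‖)] with f hf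
    refine Eventually.of_forall fun s hs => ?_
    rw [Set.uIoc_of_le ht] at hs
    calc ‖P (t - s) (B (Q s f))‖ ≤ M * ‖B (Q s f)‖ :=
          (P _).le_of_opNorm_le (hM _ ⟨sub_nonneg.2 hs.2, by linarith [hs.1]⟩) _
      _ ≤ M * (‖B‖ * ‖Q s f‖) := by gcongr; exact B.le_opNorm _
      _ ≤ M * (‖B‖ * (N * ‖f‖)) := by
          gcongr; exact (Q s).le_of_opNorm_le (hN _ (Set.Ioc_subset_Icc_self hs)) _
      _ ≤ M * (‖B‖ * (N * (‖f₀‖ + 1))) := by gcongr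
  · exact Eventually.of_forall fun s _ => by fun_prop

lemma IsBoundedPerturbation.integral_eq_sub {B : E →L[ℝ] E}
    (hPQ : IsBoundedPerturbation P Q B) (hP : IsC0Semigroup P) (hQ : IsC0Semigroup Q) (f : E)
    {t : ℝ} (ht : 0 ≤ t) : ∫ s in (0 : ℝ)..t, P (t - s) (B (Q s f)) = Q t f - P t f := by
  have hclosed : IsClosed {f | ∫ s in (0 : ℝ)..t, P (t - s) (B (Q s f)) = Q t f - P t f} :=
    isClosed_eq (hP.continuous_integral_sub_apply hQ B ht)
      ((Q t).continuous.sub (P t).continuous)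
  refine closure_minimal ?_ hclosed (hQ.dense_domain f)
  rintro f ⟨g, hf⟩
  exact hPQ.integral_eq_of_inGenerator hP hQ hf ht

end Semigroup

section Lattice

variable {E : Type*} [NormedAddCommGroup E] [NormedSpace ℝ E] [CompleteSpace E] [Lattice E]
  [HasSolidNorm E] [IsOrderedAddMonoid E] [IsOrderedModule ℝ E] {P Q : ℝ → E →L[ℝ] E}

namespace IsBoundedPerturbation

variable {B : E →L[ℝ] E}

-- Duhamel's formula, combined with `Q s f ≥ -(Q s f)⁻` under the integral.
lemma negPart_apply_le (hPQ : IsBoundedPerturbation P Q B) (hP : IsC0Semigroup P)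
    (hQ : IsC0Semigroup Q) (hPpos : ∀ t, 0 ≤ t → ∀ f, 0 ≤ f → 0 ≤ P t f)
    (hB : ∀ f, 0 ≤ f → 0 ≤ B f) {f : E} (hf : 0 ≤ f) {t : ℝ} (ht : 0 ≤ t) :
    (Q t f)⁻ ≤ ∫ s in (0 : ℝ)..t, P (t - s) (B (Q s f)⁻) := by
  have horbit : ContinuousOn (fun s => Q s f) (Set.Icc 0 t) :=
    (hQ.2 f).mono Set.Icc_subset_Ici_self
  have hint : IntervalIntegrable (fun s => P (t - s) (B (Q s f))) volume 0 t :=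
    (hP.continuousOn_sub_apply (B.continuous.comp_continuousOn horbit)).intervalIntegrable_of_Icc ht
  have hint' : IntervalIntegrable (fun s => P (t - s) (B (Q s f)⁻)) volume 0 t :=
    (hP.continuousOn_sub_apply ((B.continuous.comp continuous_negPart).comp_continuousOn
      horbit)).intervalIntegrable_of_Icc ht
  refine sup_le ?_ (intervalIntegral_nonneg ht fun s hs =>
    hPpos _ (sub_nonneg.2 hs.2) _ (hB _ (negPart_nonneg _)))
  have hsum : 0 ≤ (Q t f - P t f) + ∫ s in (0 : ℝ)..t, P (t - s) (B (Q s f)⁻) := by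
    rw [← hPQ.integral_eq_sub hP hQ f ht, ← intervalIntegral.integral_add hint hint']
    refine intervalIntegral_nonneg ht fun s hs => ?_
    rw [← map_add, ← map_add]
    exact hPpos _ (sub_nonneg.2 hs.2) _ (hB _ (neg_le_iff_add_nonneg'.1 (neg_le_negPart _)))
  rw [neg_le_iff_add_nonneg']
  calc 0 ≤ (Q t f - P t f) + (∫ s in (0 : ℝ)..t, P (t - s) (B (Q s f)⁻)) + P t f :=
        add_nonneg hsum (hPpos t ht f hf)
    _ = Q t f + ∫ s in (0 : ℝ)..t, P (t - s) (B (Q s f)⁻) := by abel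

lemma apply_nonneg (hPQ : IsBoundedPerturbation P Q B) (hP : IsC0Semigroup P)
    (hQ : IsC0Semigroup Q) (hPpos : ∀ t, 0 ≤ t → ∀ f, 0 ≤ f → 0 ≤ P t f)
    (hB : ∀ f, 0 ≤ f → 0 ≤ B f) {t : ℝ} (ht : 0 ≤ t) {f : E} (hf : 0 ≤ f) : 0 ≤ Q t f := by
  obtain ⟨M, hM0, hM⟩ := hP.exists_norm_le t
  have hcont : ContinuousOn (fun s => ‖(Q s f)⁻‖) (Set.Icc 0 t) :=
    (continuous_norm.comp continuous_negPart).comp_continuousOn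
      ((hQ.2 f).mono Set.Icc_subset_Ici_self)
  have hbound : ∀ s ∈ Set.Icc 0 t, ‖(Q s f)⁻‖ ≤ M * ‖B‖ * ∫ r in (0 : ℝ)..s, ‖(Q r f)⁻‖ := by
    intro s hs
    have hsolid : ‖(Q s f)⁻‖ ≤ ‖∫ r in (0 : ℝ)..s, P (s - r) (B (Q r f)⁻)‖ := by
      have hle := hPQ.negPart_apply_le hP hQ hPpos hB hf hs.1
      refine norm_le_norm_of_abs_le_abs ?_
      rwa [abs_of_nonneg (negPart_nonneg _), abs_of_nonneg ((negPart_nonneg _).trans hle)]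
    rw [← intervalIntegral.integral_const_mul]
    refine hsolid.trans (intervalIntegral.norm_integral_le_of_norm_le hs.1 ?_
      ((hcont.mono (Set.Icc_subset_Icc_right hs.2)).const_mul _ |>.intervalIntegrable_of_Icc hs.1))
    refine Eventually.of_forall fun r hr => ?_
    calc ‖P (s - r) (B (Q r f)⁻)‖ ≤ M * ‖B (Q r f)⁻‖ :=
          (P _).le_of_opNorm_le (hM _ ⟨sub_nonneg.2 hr.2, by linarith [hr.1, hs.2]⟩) _
      _ ≤ M * (‖B‖ * ‖(Q r f)⁻‖) := by gcongr; exact B.le_opNorm _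
      _ = M * ‖B‖ * ‖(Q r f)⁻‖ := (mul_assoc _ _ _).symm
  rw [← negPart_eq_zero, ← norm_eq_zero]
  exact eq_zero_of_le_mul_intervalIntegral hcont (fun s _ => norm_nonneg _) hbound t ⟨ht, le_rfl⟩

lemma apply_le_apply (hPQ : IsBoundedPerturbation P Q B) (hP : IsC0Semigroup P)
    (hQ : IsC0Semigroup Q) (hPpos : ∀ t, 0 ≤ t → ∀ f, 0 ≤ f → 0 ≤ P t f)
    (hB : ∀ f, 0 ≤ f → 0 ≤ B f) {t : ℝ} (ht : 0 ≤ t) {f : E} (hf : 0 ≤ f) : P t f ≤ Q t f := by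
  rw [← sub_nonneg, ← hPQ.integral_eq_sub hP hQ f ht]
  exact intervalIntegral_nonneg ht fun s hs =>
    hPpos _ (sub_nonneg.2 hs.2) _ (hB _ (hPQ.apply_nonneg hP hQ hPpos hB hs.1 hf))

lemma exp_smul_apply_le (hPQ : IsBoundedPerturbation P Q B) (hP : IsC0Semigroup P)
    (hQ : IsC0Semigroup Q) (hPpos : ∀ t, 0 ≤ t → ∀ f, 0 ≤ f → 0 ≤ P t f) {c : ℝ}
    (hB : ∀ f, 0 ≤ f → 0 ≤ B f + c • f) {t : ℝ} (ht : 0 ≤ t) {f : E} (hf : 0 ≤ f) :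
    Real.exp (-c * t) • P t f ≤ Q t f := by
  have hshift := (hP.isBoundedPerturbation_exp_smul (-c)).symm.trans hPQ
  refine hshift.apply_le_apply (hP.exp_smul (-c)) hQ
    (fun t ht f hf => smul_nonneg (Real.exp_pos _).le (hPpos t ht f hf)) (fun f hf => ?_) ht hf
  simpa [add_comm] using hB f hf

end IsBoundedPerturbation

end Lattice

section Lp

variable {Ω : Type*} [MeasurableSpace Ω] {μ : Measure Ω} {p : ℝ≥0∞}

instance instIsOrderedModuleLp : IsOrderedModule ℝ (Lp ℝ p μ) := .of_smul_nonneg fun a ha f hf => by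
  rw [← Lp.coeFn_nonneg] at hf ⊢
  filter_upwards [hf, Lp.coeFn_smul a f] with ω hfω hsmul
  rw [hsmul]
  exact mul_nonneg ha hfω

/-- `M` is multiplication by `W` on `L_p(μ)`. No measurability is asked of `W` itself, only that
the products `W * f` have representatives in `L_p(μ)`. -/
def IsMulOperator (W : Ω → ℝ) (M : Lp ℝ p μ → Lp ℝ p μ) : Prop :=
  ∀ f, ⇑(M f) =ᵐ[μ] fun ω => W ω * f ω

lemma IsMulOperator.apply_le_apply_add_smul {W₁ W₂ : Ω → ℝ} {M₁ M₂ : Lp ℝ p μ → Lp ℝ p μ}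
    (h₁ : IsMulOperator W₁ M₁) (h₂ : IsMulOperator W₂ M₂) {c : ℝ}
    (hW : ∀ᵐ ω ∂μ, W₁ ω ≤ c + W₂ ω) {f : Lp ℝ p μ} (hf : 0 ≤ f) : M₁ f ≤ M₂ f + c • f := by
  rw [← Lp.coeFn_nonneg] at hf
  rw [← Lp.coeFn_le]
  filter_upwards [hf, hW, h₁ f, h₂ f, Lp.coeFn_add (M₂ f) (c • f), Lp.coeFn_smul c f]
    with ω hfω hWω hM₁ hM₂ hadd hsmul
  rw [hadd, Pi.add_apply, hsmul, Pi.smul_apply, smul_eq_mul, hM₁, hM₂, ← add_mul, add_comm (W₂ ω)]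
  exact mul_le_mul_of_nonneg_right hWω hfω

variable [Fact (1 ≤ p)]

lemma isClosed_setOf_aestronglyMeasurable_mul (W : Ω → ℝ) :
    IsClosed {f : Lp ℝ p μ | AEStronglyMeasurable (fun ω => W ω * f ω) μ} := by
  refine IsSeqClosed.isClosed fun u f hu huf => ?_
  obtain ⟨k, -, hk⟩ := (tendstoInMeasure_of_tendsto_Lp huf).exists_seq_tendsto_ae
  refine aestronglyMeasurable_of_tendsto_ae atTop (fun n => hu (k n)) ?_
  filter_upwards [hk] with ω hω using hω.const_mul (W ω)

lemma exists_isMulOperator {W : Ω → ℝ} {C : ℝ} (hC : ∀ᵐ ω ∂μ, |W ω| ≤ C)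
    (hW : ∀ f : Lp ℝ p μ, AEStronglyMeasurable (fun ω => W ω * f ω) μ) :
    ∃ M : Lp ℝ p μ →L[ℝ] Lp ℝ p μ, IsMulOperator W M := by
  have hbound (f : Lp ℝ p μ) : ∀ᵐ ω ∂μ, ‖W ω * f ω‖ ≤ C * ‖f ω‖ := by
    filter_upwards [hC] with ω hω
    rw [norm_mul]
    exact mul_le_mul_of_nonneg_right hω (norm_nonneg _)
  have hmem (f : Lp ℝ p μ) : MemLp (fun ω => W ω * f ω) p μ :=
    (Lp.memLp f).of_le_mul (hW f) (hbound f)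
  let M : Lp ℝ p μ →ₗ[ℝ] Lp ℝ p μ :=
    { toFun := fun f => (hmem f).toLp
      map_add' := fun f g => by
        rw [← MemLp.toLp_add, MemLp.toLp_eq_toLp_iff]
        filter_upwards [Lp.coeFn_add f g] with ω hω
        simp only [hω, Pi.add_apply, mul_add]
      map_smul' := fun c f => by
        rw [RingHom.id_apply, ← MemLp.toLp_const_smul, MemLp.toLp_eq_toLp_iff]
        filter_upwards [Lp.coeFn_smul c f] with ω hω
        simp only [hω, Pi.smul_apply, smul_eq_mul, mul_left_comm] }
  refine ⟨M.mkContinuous C fun f => Lp.norm_le_mul_norm_of_ae_le_mul ?_,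
    fun f => (hmem f).coeFn_toLp⟩
  filter_upwards [(hmem f).coeFn_toLp, hbound f] with ω hω hle
  rwa [← hω] at hle

namespace IsPerturbedSG

variable {T S S₁ S₂ : ℝ → Lp ℝ p μ →L[ℝ] Lp ℝ p μ} {W W₁ W₂ : Ω → ℝ} {C C₁ C₂ : ℝ}

-- On the domain of the generator of `S`, the product `W * f` is a difference of `L_p` functions.
lemma aestronglyMeasurable_mul (hS : IsPerturbedSG μ p T S W) (f : Lp ℝ p μ) :
    AEStronglyMeasurable (fun ω => W ω * f ω) μ := by
  refine closure_minimal ?_ (isClosed_setOf_aestronglyMeasurable_mul W) (hS.1.dense_domain f)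
  rintro f ⟨g, hg⟩
  obtain ⟨g₀, -, hg₀⟩ := (hS.2 f g).1 hg
  refine ((Lp.aestronglyMeasurable g₀).sub (Lp.aestronglyMeasurable g)).congr ?_
  filter_upwards [hg₀] with ω hω
  rw [Pi.sub_apply, hω, sub_sub_self]

lemma isBoundedPerturbation (hS : IsPerturbedSG μ p T S W) {M : Lp ℝ p μ →L[ℝ] Lp ℝ p μ}
    (hM : IsMulOperator W M) : IsBoundedPerturbation T S (-M) := by
  intro f g
  have hgraph (g₀ : Lp ℝ p μ) : (⇑g =ᵐ[μ] fun ω => g₀ ω - W ω * f ω) ↔ g₀ = g - (-M) f := by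
    have hsub : ⇑(g₀ - M f) =ᵐ[μ] fun ω => g₀ ω - W ω * f ω :=
      (Lp.coeFn_sub g₀ (M f)).trans (EventuallyEq.rfl.sub (hM f))
    rw [neg_apply, sub_neg_eq_add, ← sub_eq_iff_eq_add, eq_comm, Lp.ext_iff]
    exact ⟨fun h => h.trans hsub.symm, fun h => h.trans hsub⟩
  simp only [hS.2, hgraph, exists_eq_right]

lemma exists_isMulOperator_isBoundedPerturbation (hS : IsPerturbedSG μ p T S W)
    (hC : ∀ᵐ ω ∂μ, |W ω| ≤ C) :
    ∃ M : Lp ℝ p μ →L[ℝ] Lp ℝ p μ, IsMulOperator W M ∧ IsBoundedPerturbation T S (-M) := by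
  obtain ⟨M, hM⟩ := exists_isMulOperator hC hS.aestronglyMeasurable_mul
  exact ⟨M, hM, hS.isBoundedPerturbation hM⟩

lemma isPositiveSG (hS : IsPerturbedSG μ p T S W) (hT : IsC0Semigroup T) (hTpos : IsPositiveSG T)
    (hC : ∀ᵐ ω ∂μ, |W ω| ≤ C) : IsPositiveSG S := by
  obtain ⟨M, hM, hTS⟩ := hS.exists_isMulOperator_isBoundedPerturbation hC
  have hzero : IsMulOperator (fun _ => 0) (0 : Lp ℝ p μ → Lp ℝ p μ) := fun f =>
    (Lp.coeFn_zero ℝ p μ).trans (.of_eq (funext fun ω => (zero_mul (f ω)).symm))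
  refine fun t ht f hf => (smul_nonneg (Real.exp_pos _).le (hTpos t ht f hf)).trans
    (hTS.exp_smul_apply_le hT hS.1 hTpos (c := C) (fun f hf => ?_) ht hf)
  have hle : M f ≤ 0 + C • f := hM.apply_le_apply_add_smul hzero
    (hC.mono fun ω hω => by simpa using (le_abs_self _).trans hω) hf
  rw [neg_apply, neg_add_eq_sub, sub_nonneg]
  simpa only [zero_add] using hle

lemma exp_smul_apply_le (hS₁ : IsPerturbedSG μ p T S₁ W₁) (hS₂ : IsPerturbedSG μ p T S₂ W₂)
    (hT : IsC0Semigroup T) (hTpos : IsPositiveSG T) (hC₁ : ∀ᵐ ω ∂μ, |W₁ ω| ≤ C₁)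
    (hC₂ : ∀ᵐ ω ∂μ, |W₂ ω| ≤ C₂) {c : ℝ} (hW : ∀ᵐ ω ∂μ, W₁ ω ≤ c + W₂ ω) {t : ℝ} (ht : 0 ≤ t)
    {f : Lp ℝ p μ} (hf : 0 ≤ f) : Real.exp (-c * t) • S₂ t f ≤ S₁ t f := by
  obtain ⟨M₁, hM₁, hTS₁⟩ := hS₁.exists_isMulOperator_isBoundedPerturbation hC₁
  obtain ⟨M₂, hM₂, hTS₂⟩ := hS₂.exists_isMulOperator_isBoundedPerturbation hC₂
  refine (hTS₂.symm.trans hTS₁).exp_smul_apply_le hS₂.1 hS₁.1 (hS₂.isPositiveSG hT hTpos hC₂)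
    (fun f hf => ?_) ht hf
  have hle := hM₁.apply_le_apply_add_smul hM₂ hW hf
  rw [neg_neg, add_apply, neg_apply, ← sub_eq_add_neg, sub_add_eq_add_sub]
  exact sub_nonneg.2 hle

end IsPerturbedSG

end Lp

section Rates

variable {Ω : Type*} {V W : Ω → ℝ≥0∞}

lemma abs_trunc_le (V : Ω → ℝ≥0∞) (n : ℕ) (ω : Ω) : |trunc V n ω| ≤ n := by
  rw [trunc, abs_of_nonneg toReal_nonneg]
  exact toReal_le_of_le_ofReal n.cast_nonneg (by simp)

lemma trunc_le_add_trunc {c : ℝ} (hc : 0 ≤ c) {ω : Ω} (hVW : V ω ≤ ENNReal.ofReal c + W ω)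
    (n : ℕ) : trunc V n ω ≤ c + trunc W n ω := by
  have hfin : min (W ω) n ≠ ∞ := ((min_le_right _ _).trans_lt (natCast_lt_top n)).ne
  calc trunc V n ω ≤ (ENNReal.ofReal c + min (W ω) n).toReal := by
        refine toReal_mono (add_ne_top.2 ⟨ofReal_ne_top, hfin⟩) ?_
        rw [← min_add_add_left]
        exact min_le_min hVW le_add_self
    _ = c + trunc W n ω := by rw [toReal_add ofReal_ne_top hfin, toReal_ofReal hc, trunc]

lemma smulRate_le_add_resid {ε : ℝ} (hε0 : 0 ≤ ε) (hε1 : ε ≤ 1) (V : Ω → ℝ≥0∞) (n : ℕ) (ω : Ω) :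
    smulRate ε V ω ≤ ENNReal.ofReal (ε * n) + resid V n ω :=
  calc smulRate ε V ω = ENNReal.ofReal ε * (min (V ω) n + resid V n ω) := by
        rw [smulRate, resid, add_tsub_cancel_of_le (min_le_left _ _)]
    _ ≤ ENNReal.ofReal ε * (n + resid V n ω) := by gcongr; exact min_le_right _ _
    _ = ENNReal.ofReal (ε * n) + ENNReal.ofReal ε * resid V n ω := by
        rw [mul_add, ofReal_mul hε0, ofReal_natCast]
    _ ≤ ENNReal.ofReal (ε * n) + resid V n ω := by
        gcongr
        exact mul_le_of_le_one_left' (ofReal_le_one.2 hε1)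

end Rates

lemma IsAbsorptionSG.exp_smul_apply_le {Ω : Type*} [MeasurableSpace Ω] {μ : Measure Ω} {p : ℝ≥0∞}
    [Fact (1 ≤ p)] {T TV TW : ℝ → Lp ℝ p μ →L[ℝ] Lp ℝ p μ} {V W : Ω → ℝ≥0∞}
    (hTV : IsAbsorptionSG μ p T V TV) (hTW : IsAbsorptionSG μ p T W TW) (hT : IsC0Semigroup T)
    (hTpos : IsPositiveSG T) {c : ℝ} (hc : 0 ≤ c)
    (hVW : ∀ᵐ ω ∂μ, V ω ≤ ENNReal.ofReal c + W ω) {t : ℝ} (ht : 0 ≤ t) {f : Lp ℝ p μ}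
    (hf : 0 ≤ f) : Real.exp (-c * t) • TW t f ≤ TV t f := by
  obtain ⟨SV, hSV, hSVlim⟩ := hTV
  obtain ⟨SW, hSW, hSWlim⟩ := hTW
  refine le_of_tendsto_of_tendsto' ((hSWlim t ht f).const_smul _) (hSVlim t ht f) fun n => ?_
  exact (hSV n).exp_smul_apply_le (hSW n) hT hTpos (ae_of_all _ (abs_trunc_le V n))
    (ae_of_all _ (abs_trunc_le W n)) (hVW.mono fun ω hω => trunc_le_add_trunc hc hω n) ht hf

lemma tendsto_exp_neg_mul_smul {E : Type*} [NormedAddCommGroup E] [NormedSpace ℝ E] (a : ℝ)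
    (f : E) : Tendsto (fun ε : ℝ => Real.exp (-(ε * a)) • f) (𝓝[>] 0) (𝓝 f) := by
  have hcont : Continuous fun ε : ℝ => Real.exp (-(ε * a)) • f := by fun_prop
  simpa using (hcont.tendsto 0).mono_left nhdsWithin_le_nhds

end Absorption

theorem statement3_general
    {Ω : Type*} [MeasurableSpace Ω] (μ : Measure Ω) (p : ℝ≥0∞) [Fact (1 ≤ p)]
    (T : ℝ → Lp ℝ p μ →L[ℝ] Lp ℝ p μ)
    (hT : IsC0Semigroup T) (hTpos : IsPositiveSG T)
    (V : Ω → ℝ≥0∞)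
    (Sε : ℝ → ℝ → Lp ℝ p μ →L[ℝ] Lp ℝ p μ)
    (hSε : ∀ ε : ℝ, 0 < ε → ε ≤ 1 → IsAbsorptionSG μ p T (smulRate ε V) (Sε ε))
    (R : ℕ → ℝ → Lp ℝ p μ →L[ℝ] Lp ℝ p μ)
    (hR : ∀ n : ℕ, IsAbsorptionSG μ p T (resid V n) (R n))
    (L₁ L₂ : ℝ → Lp ℝ p μ →L[ℝ] Lp ℝ p μ)
    (hL₁ : ∀ t : ℝ, 0 ≤ t → ∀ f : Lp ℝ p μ,
      Tendsto (fun ε : ℝ => Sε ε t f) (𝓝[>] (0 : ℝ)) (𝓝 (L₁ t f)))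
    (hL₂ : ∀ t : ℝ, 0 ≤ t → ∀ f : Lp ℝ p μ,
      Tendsto (fun n : ℕ => R n t f) atTop (𝓝 (L₂ t f))) :
    (∀ ε : ℝ, 0 < ε → ε ≤ 1 → ∀ n : ℕ, ∀ t : ℝ, 0 ≤ t → ∀ f : Lp ℝ p μ, 0 ≤ f →
        Real.exp (-(ε * n * t)) • R n t f ≤ Sε ε t f) ∧
    (∀ t : ℝ, 0 ≤ t → ∀ f : Lp ℝ p μ, 0 ≤ f → L₂ t f ≤ L₁ t f) := by
  have hdom : ∀ ε : ℝ, 0 < ε → ε ≤ 1 → ∀ n : ℕ, ∀ t : ℝ, 0 ≤ t → ∀ f : Lp ℝ p μ, 0 ≤ f →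
      Real.exp (-(ε * n * t)) • R n t f ≤ Sε ε t f := fun ε hε0 hε1 n t ht f hf => by
    simpa only [neg_mul] using (hSε ε hε0 hε1).exp_smul_apply_le (hR n) hT hTpos (by positivity)
      (ae_of_all _ (smulRate_le_add_resid hε0.le hε1 V n)) ht hf
  refine ⟨hdom, fun t ht f hf => le_of_tendsto' (hL₂ t ht f) fun n => ?_⟩
  refine le_of_tendsto_of_tendsto (tendsto_exp_neg_mul_smul (n * t) (R n t f)) (hL₁ t ht f) ?_
  filter_upwards [Ioc_mem_nhdsGT zero_lt_one] with ε hε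
  simpa only [mul_assoc] using hdom ε hε.1 hε.2 n t ht f hf

/-- For `T`-admissible `V`: `T_{εV}(t) ≥ e^{−εnt} T_{V−V∧n}(t)` for all
`ε ∈ (0,1]`, `n ∈ ℕ`, `t ≥ 0`, and consequently `T_{0,V} ≥ (T_V)_{−V}`. -/
theorem statement3
    {Ω : Type*} [MeasurableSpace Ω] (μ : Measure Ω) (p : ℝ≥0∞) [Fact (1 ≤ p)] (hp : p ≠ ∞)
    (T : ℝ → Lp ℝ p μ →L[ℝ] Lp ℝ p μ)
    (hT : IsC0Semigroup T) (hTpos : IsPositiveSG T)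
    (V : Ω → ℝ≥0∞) (hV : Admissible μ p T V)
    -- the absorption semigroups `T_{εV}` for `ε ∈ (0,1]`
    (Sε : ℝ → ℝ → Lp ℝ p μ →L[ℝ] Lp ℝ p μ)
    (hSε : ∀ ε : ℝ, 0 < ε → ε ≤ 1 → IsAbsorptionSG μ p T (smulRate ε V) (Sε ε))
    -- the absorption semigroups `T_{V − V∧n}`
    (R : ℕ → ℝ → Lp ℝ p μ →L[ℝ] Lp ℝ p μ)
    (hR : ∀ n : ℕ, IsAbsorptionSG μ p T (resid V n) (R n))
    -- `T_{0,V} = s-lim_{ε→0+} T_{εV}` and `(T_V)_{−V} = s-lim_{n→∞} T_{V−V∧n}`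
    (L₁ L₂ : ℝ → Lp ℝ p μ →L[ℝ] Lp ℝ p μ)
    (hL₁ : ∀ t : ℝ, 0 ≤ t → ∀ f : Lp ℝ p μ,
      Tendsto (fun ε : ℝ => Sε ε t f) (𝓝[>] (0 : ℝ)) (𝓝 (L₁ t f)))
    (hL₂ : ∀ t : ℝ, 0 ≤ t → ∀ f : Lp ℝ p μ,
      Tendsto (fun n : ℕ => R n t f) atTop (𝓝 (L₂ t f))) :
    (∀ ε : ℝ, 0 < ε → ε ≤ 1 → ∀ n : ℕ, ∀ t : ℝ, 0 ≤ t → ∀ f : Lp ℝ p μ, 0 ≤ f →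
        Real.exp (-(ε * n * t)) • R n t f ≤ Sε ε t f) ∧
    (∀ t : ℝ, 0 ≤ t → ∀ f : Lp ℝ p μ, 0 ≤ f → L₂ t f ≤ L₁ t f) :=
  statement3_general μ p T hT hTpos V Sε hSε R hR L₁ L₂ hL₁ hL₂
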